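/- Let A be a commutative ring, B a finitely generated A-algebra, and M a B-module. If M is intrinsically of finite presentation over A, then M is finitely presented as a B-module. -/

import Mathlib

/-- An `S`-module `N` is *intrinsically of finite presentation* over `R` if there exist an
`n : ℕ` and an `R`-algebra homomorphism `f : R[x₁, …, xₙ] → S` from a polynomial ring over `R`
such that `N`, viewed as an `R[x₁, …, xₙ]`-module via restriction of scalars along `f`, is
finitely presented. -/
def Module.IntrinsicallyFinitePresentation (R S N : Type*) [CommRing R] [CommRing S]
    [Algebra R S] [AddCommGroup N] [Module S N] : Prop :=
  ∃ (n : ℕ) (f : MvPolynomial (Fin n) R →ₐ[R] S),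
    letI : Module (MvPolynomial (Fin n) R) N := Module.compHom N f.toRingHom
    Module.FinitePresentation (MvPolynomial (Fin n) R) N

/-!
If `B` is a `P`-algebra of finite type and the `B`-module `M` is finitely presented over `P`, then
`B ⊗[P] M` is finitely presented over `B`, so it is enough to see that the kernel of the surjection
`B ⊗[P] M → M`, `b ⊗ m ↦ b • m`, is finitely generated. The elements
`δ b m = b ⊗ m - 1 ⊗ b • m` span this kernel, and `δ` is `P`-bilinear with
`δ (b * c) m = b • δ c m + δ b (c • m)`. Hence those `δ g t` suffice for which `g` runs through
algebra generators of `B` and `t` through module generators of `M` over `P`.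
-/

open TensorProduct

section SMulDefect

variable (P : Type*) {B M : Type*} [CommRing P] [Ring B] [Algebra P B]
  [AddCommGroup M] [Module P M] [Module B M] [IsScalarTower P B M]

variable (B M) in
/-- The `P`-bilinear map `(b, m) ↦ b ⊗ m - 1 ⊗ b • m`, which measures the failure of scalars in `B`
to move across `B ⊗[P] M`. Its values generate the kernel of `B ⊗[P] M → M`. -/
def smulDefect : B →ₗ[P] M →ₗ[P] B ⊗[P] M :=
  LinearMap.mk₂ P (fun b m ↦ b ⊗ₜ[P] m - 1 ⊗ₜ[P] (b • m))
    (fun b c m ↦ by simp only [add_tmul, add_smul, tmul_add, add_sub_add_comm])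
    (fun p b m ↦ by simp only [smul_tmul', smul_assoc, tmul_smul, smul_sub])
    (fun b m n ↦ by simp only [tmul_add, smul_add, add_sub_add_comm])
    (fun p b m ↦ by simp only [tmul_smul, smul_comm b p m, smul_sub])

lemma smulDefect_apply (b : B) (m : M) :
    smulDefect P B M b m = b ⊗ₜ[P] m - 1 ⊗ₜ[P] (b • m) :=
  rfl

lemma smulDefect_algebraMap (p : P) : smulDefect P B M (algebraMap P B p) = 0 := by
  ext m
  simp [smulDefect_apply, Algebra.algebraMap_eq_smul_one]

lemma smulDefect_mul (b c : B) (m : M) :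
    smulDefect P B M (b * c) m = b • smulDefect P B M c m + smulDefect P B M b (c • m) := by
  simp [smulDefect_apply, smul_sub, smul_tmul', mul_smul]

variable {P}

lemma smulDefect_mem_of_mem_adjoin {K : Submodule B (B ⊗[P] M)} {G : Set B}
    (hK : ∀ g ∈ G, ∀ m, smulDefect P B M g m ∈ K) {b : B} (hb : b ∈ Algebra.adjoin P G) (m : M) :
    smulDefect P B M b m ∈ K := by
  induction hb using Algebra.adjoin_induction generalizing m with
  | mem g hg => exact hK g hg m
  | algebraMap p => simp [smulDefect_algebraMap]
  | add b c _ _ hb hc => simpa using K.add_mem (hb m) (hc m)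
  | mul b c _ _ hb hc =>
    rw [smulDefect_mul]
    exact K.add_mem (K.smul_mem b (hc m)) (hb (c • m))

lemma smulDefect_mem_span_image2 {G : Set B} {T : Set M} (hG : Algebra.adjoin P G = ⊤)
    (hT : Submodule.span P T = ⊤) (b : B) (m : M) :
    smulDefect P B M b m ∈ Submodule.span B (Set.image2 (smulDefect P B M · ·) G T) := by
  set K := Submodule.span B (Set.image2 (smulDefect P B M · ·) G T)
  have generator_mem (g : B) (hg : g ∈ G) (m : M) : smulDefect P B M g m ∈ K := by
    have span_le : Submodule.span P T ≤ (K.restrictScalars P).comap (smulDefect P B M g) :=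
      Submodule.span_le.2 fun t ht ↦ Submodule.subset_span ⟨g, hg, t, ht, rfl⟩
    exact span_le (hT ▸ Submodule.mem_top)
  exact smulDefect_mem_of_mem_adjoin generator_mem (hG ▸ Algebra.mem_top) m

end SMulDefect

section CommRing

variable {P B M : Type*} [CommRing P] [CommRing B] [Algebra P B]
  [AddCommGroup M] [Module P M] [Module B M] [IsScalarTower P B M]

lemma ker_liftBaseChange_id_eq_span_smulDefect {G : Set B} {T : Set M}
    (hG : Algebra.adjoin P G = ⊤) (hT : Submodule.span P T = ⊤) :
    LinearMap.ker (LinearMap.liftBaseChange B (LinearMap.id : M →ₗ[P] M)) =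
      Submodule.span B (Set.image2 (smulDefect P B M · ·) G T) := by
  set l := LinearMap.liftBaseChange B (LinearMap.id : M →ₗ[P] M)
  set K := Submodule.span B (Set.image2 (smulDefect P B M · ·) G T)
  apply le_antisymm
  · have sub_mem (x : B ⊗[P] M) : x - 1 ⊗ₜ[P] l x ∈ K := by
      induction x with
      | zero => simp
      | tmul b m => simpa [l, ← smulDefect_apply] using smulDefect_mem_span_image2 hG hT b m
      | add x y hx hy => simpa [tmul_add, add_sub_add_comm] using K.add_mem hx hy
    intro x hx
    simpa [LinearMap.mem_ker.1 hx] using sub_mem x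
  · rw [Submodule.span_le]
    rintro _ ⟨g, -, t, -, rfl⟩
    simp [l, smulDefect_apply]

variable (P B M) in
lemma fg_ker_liftBaseChange_id [Algebra.FiniteType P B] [Module.Finite P M] :
    (LinearMap.ker (LinearMap.liftBaseChange B (LinearMap.id : M →ₗ[P] M))).FG := by
  obtain ⟨G, hG⟩ := Algebra.FiniteType.out (R := P) (A := B)
  obtain ⟨T, hT⟩ := Module.Finite.fg_top (R := P) (M := M)
  rw [ker_liftBaseChange_id_eq_span_smulDefect hG hT]
  exact Submodule.fg_span (G.finite_toSet.image2 _ T.finite_toSet)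

variable (P B M) in
lemma finitePresentation_of_restrictScalars [Algebra.FiniteType P B]
    [Module.FinitePresentation P M] : Module.FinitePresentation B M :=
  Module.finitePresentation_of_surjective (LinearMap.liftBaseChange B (LinearMap.id : M →ₗ[P] M))
    (fun m ↦ ⟨1 ⊗ₜ m, by simp⟩) (fg_ker_liftBaseChange_id P B M)

end CommRing

lemma algHom_toRingHom_finiteType {A P B : Type*} [CommRing A] [CommRing P] [CommRing B]
    [Algebra A P] [Algebra A B] [Algebra.FiniteType A B] (f : P →ₐ[A] B) :
    f.toRingHom.FiniteType := by
  refine .of_comp_finiteType (f := algebraMap A P) ?_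
  rw [AlgHom.toRingHom_eq_coe, f.comp_algebraMap]
  exact RingHom.finiteType_algebraMap.2 inferInstance

theorem Module.IntrinsicallyFinitePresentation.finitePresentation_general
    {P B M : Type*} [CommRing P] [CommRing B] [AddCommGroup M] [Module B M]
    (f : P →+* B) (hf : f.FiniteType)
    (h : letI : Module P M := Module.compHom M f
      Module.FinitePresentation P M) :
    Module.FinitePresentation B M := by
  let : Algebra P B := f.toAlgebra
  let : Module P M := Module.compHom M f
  have : IsScalarTower P B M := ⟨fun p b m ↦ mul_smul (f p) b m⟩
  have : Algebra.FiniteType P B := hf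
  have : Module.FinitePresentation P M := h
  exact finitePresentation_of_restrictScalars P B M

/-- Let `A` be a commutative ring, `B` a finitely generated `A`-algebra, and
`M` a `B`-module. If `M` is intrinsically of finite presentation over `A`, then `M` is
finitely presented as a `B`-module. -/
theorem Module.IntrinsicallyFinitePresentation.finitePresentation
    (A B M : Type*) [CommRing A] [CommRing B] [Algebra A B] [Algebra.FiniteType A B]
    [AddCommGroup M] [Module B M]
    (h : Module.IntrinsicallyFinitePresentation A B M) :
    Module.FinitePresentation B M := by
  obtain ⟨n, f, hM⟩ := h
  exact finitePresentation_general f.toRingHom (algHom_toRingHom_finiteType f) hM
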